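/- For every integer m ≥ 2 and every integer t ≥ 1 there exists a constant C = C(t,m), independent of N, such that for every integer N ≥ 1 and every f : G → ℂ, Σ_{x ∈ G} Σ_{k=0}^{⌊N/(m+1)⌋} (k+1)^{2t−1} · |Σ_{j=0}^{t} (−1)^j · C(t,j) · (σ_{N−k+j} * f)(x)|² ≤ C² · Σ_{x ∈ G} |f(x)|², where σ_s = 0 when s > N and C(t,j) is the binomial coefficient. -/

import Mathlib

open Finset

noncomputable section

/-- Hamming weight on `(ℤ/(m+1)ℤ)^N`. -/
def hw {m N : ℕ} (y : Fin N → ZMod (m + 1)) : ℕ :=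
  (Finset.univ.filter fun i => y i ≠ 0).card

/-- `L¹`-normalized indicator of the sphere of radius `r` (zero if `r < 0` or `r > N`). -/
def sigmaC (m N : ℕ) (r : ℤ) : (Fin N → ZMod (m + 1)) → ℂ := fun x =>
  if (hw x : ℤ) = r then
    ((Finset.univ.filter fun y : Fin N → ZMod (m + 1) => (hw y : ℤ) = r).card : ℂ)⁻¹
  else 0

/-- Convolution on `(ℤ/(m+1)ℤ)^N`. -/
def convC {m N : ℕ} (g f : (Fin N → ZMod (m + 1)) → ℂ) : (Fin N → ZMod (m + 1)) → ℂ :=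
  fun x => ∑ y, g y * f (x - y)

/-!
On the Fourier side, convolution with `σ_{N-k}` multiplies by the normalized Krawtchouk polynomial
`κ_{w,u}(k)`, the ratio of the coefficients of `X ^ k` in `(X - 1) ^ w (X + m) ^ u` and in
`(X + m) ^ N`, where `w` is the number of coordinates on which the character is nontrivial and
`u = N - w`. Differentiating the generating polynomial shows that a difference in `k` lowers `w`:
`Δ κ_{w,u} = ((m + 1) / m) (w / N) κ_{w-1,u}`. For `(m + 1) k ≤ N` we have
`|κ_{w,u}(k)| ≤ (2 / (m + 1)) ^ w`, and since `m ≥ 2` this exponential decay absorbs the factor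
`w ^ t`; so the `t`-th difference is `O(N ^ (-t))` uniformly in the character as soon as `k ≥ t`,
and the sum over `k < N` of its square times `(k + 1) ^ (2 t - 1)` is `O(1)`. The finitely many
`k < t` are bounded trivially, and Plancherel concludes.
-/

section CharTransform

variable {G : Type*} [AddCommGroup G] [Fintype G]

/-- The Fourier transform of `f` on a finite abelian group, as a function of the character `ψ`.
There is no conjugate on `ψ` and no normalization, so convolutions become products. -/
def charTransform (f : G → ℂ) (ψ : AddChar G ℂ) : ℂ :=
  ∑ x, f x * ψ x

lemma charTransform_conv (g f : G → ℂ) (ψ : AddChar G ℂ) :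
    charTransform (fun x => ∑ y, g y * f (x - y)) ψ = charTransform g ψ * charTransform f ψ := by
  simp only [charTransform, sum_mul]
  rw [sum_comm]
  refine sum_congr rfl fun y _ => ?_
  rw [mul_sum]
  refine Fintype.sum_equiv (Equiv.subRight y) _ _ fun x => ?_
  have hψ : ψ x = ψ y * ψ (x - y) := by rw [← AddChar.map_add_eq_mul, add_sub_cancel]
  rw [Equiv.subRight_apply, hψ]
  ring

lemma charTransform_sum_mul {κ : Type*} (s : Finset κ) (c : κ → ℂ) (g : κ → G → ℂ)
    (ψ : AddChar G ℂ) :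
    charTransform (fun x => ∑ j ∈ s, c j * g j x) ψ = ∑ j ∈ s, c j * charTransform (g j) ψ := by
  simp only [charTransform, sum_mul, mul_sum, mul_assoc]
  exact sum_comm

lemma norm_charTransform_le (f : G → ℂ) (ψ : AddChar G ℂ) :
    ‖charTransform f ψ‖ ≤ ∑ x, ‖f x‖ :=
  (norm_sum_le _ _).trans_eq <| by simp only [norm_mul, AddChar.norm_apply, mul_one]

theorem sum_norm_sq_charTransform (f : G → ℂ) :
    ∑ ψ, ‖charTransform f ψ‖ ^ 2 = Fintype.card G * ∑ x, ‖f x‖ ^ 2 := by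
  classical
  have expand (ψ : AddChar G ℂ) : (‖charTransform f ψ‖ : ℂ) ^ 2 =
      ∑ x, ∑ y, f x * starRingEnd ℂ (f y) * ψ (x - y) := by
    rw [← Complex.mul_conj', charTransform, map_sum, sum_mul_sum]
    refine sum_congr rfl fun x _ => sum_congr rfl fun y _ => ?_
    rw [map_mul, sub_eq_add_neg, AddChar.map_add_eq_mul, AddChar.map_neg_eq_conj]
    ring
  have orthogonality : ∑ ψ, (‖charTransform f ψ‖ : ℂ) ^ 2 =
      Fintype.card G * ∑ x, (‖f x‖ : ℂ) ^ 2 := by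
    calc ∑ ψ, (‖charTransform f ψ‖ : ℂ) ^ 2
      _ = ∑ x, ∑ y, f x * starRingEnd ℂ (f y) * ∑ ψ : AddChar G ℂ, ψ (x - y) := by
        simp only [expand, mul_sum]
        rw [sum_comm]
        exact sum_congr rfl fun x _ => sum_comm
      _ = Fintype.card G * ∑ x, (‖f x‖ : ℂ) ^ 2 := by
        simp only [AddChar.sum_apply_eq_ite, sub_eq_zero, mul_ite, mul_zero, sum_ite_eq, mem_univ,
          if_true, Complex.mul_conj', mul_sum]
        exact sum_congr rfl fun x _ => mul_comm _ _
  exact_mod_cast orthogonality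

theorem sum_sum_mul_norm_sq_conv_le {κ : Type*} (s : Finset κ) (c : κ → ℝ) (g : κ → G → ℂ)
    {K : ℝ} (hK : ∀ ψ, ∑ k ∈ s, c k * ‖charTransform (g k) ψ‖ ^ 2 ≤ K) (f : G → ℂ) :
    ∑ x, ∑ k ∈ s, c k * ‖∑ y, g k y * f (x - y)‖ ^ 2 ≤ K * ∑ x, ‖f x‖ ^ 2 := by
  have plancherel (k : κ) : Fintype.card G * ∑ x, ‖∑ y, g k y * f (x - y)‖ ^ 2 =
      ∑ ψ, ‖charTransform (g k) ψ‖ ^ 2 * ‖charTransform f ψ‖ ^ 2 := by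
    simp only [← sum_norm_sq_charTransform fun x => ∑ y, g k y * f (x - y), charTransform_conv,
      norm_mul, mul_pow]
  have card_pos : (0 : ℝ) < Fintype.card G := by exact_mod_cast Fintype.card_pos
  refine le_of_mul_le_mul_left ?_ card_pos
  calc (Fintype.card G : ℝ) * ∑ x, ∑ k ∈ s, c k * ‖∑ y, g k y * f (x - y)‖ ^ 2
    _ = ∑ k ∈ s, c k * (Fintype.card G * ∑ x, ‖∑ y, g k y * f (x - y)‖ ^ 2) := by
      simp only [sum_comm (s := univ) (t := s), mul_sum, mul_left_comm]
    _ = ∑ ψ, (∑ k ∈ s, c k * ‖charTransform (g k) ψ‖ ^ 2) * ‖charTransform f ψ‖ ^ 2 := by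
      simp only [plancherel, mul_sum, sum_mul, mul_assoc]
      exact sum_comm
    _ ≤ ∑ ψ, K * ‖charTransform f ψ‖ ^ 2 := by gcongr with ψ; exact hK ψ
    _ = Fintype.card G * (K * ∑ x, ‖f x‖ ^ 2) := by
      rw [← mul_sum, sum_norm_sq_charTransform, mul_left_comm]

end CharTransform

section Krawtchouk

open Polynomial fwdDiff

lemma coeff_X_add_C_pow_pos {a : ℝ} (ha : 0 < a) {n k : ℕ} (hk : k ≤ n) :
    0 < ((X + C a) ^ n).coeff k := by
  have := Nat.choose_pos hk
  rw [coeff_X_add_C_pow]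
  positivity

lemma coeff_X_add_C_pow_nonneg {a : ℝ} (ha : 0 ≤ a) (n k : ℕ) :
    0 ≤ ((X + C a) ^ n).coeff k := by
  rw [coeff_X_add_C_pow]
  positivity

lemma succ_mul_coeff_succ_X_add_C_pow_succ {R : Type*} [CommSemiring R] (a : R) (n k : ℕ) :
    (k + 1 : R) * ((X + C a) ^ (n + 1)).coeff (k + 1) =
      (n + 1 : R) * ((X + C a) ^ n).coeff k := by
  rw [mul_comm, ← coeff_derivative, derivative_X_add_C_pow, Nat.add_sub_cancel, coeff_C_mul,
    Nat.cast_succ]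

/-- The generating polynomial of the Krawtchouk polynomials: for `w + u = N`, the coefficient of
`X ^ k` is the sum of a character of dual weight `w` over the Hamming sphere of radius `N - k` in
`A ^ N`, where `#A = a + 1`. -/
def krawtchoukGen {R : Type*} [CommRing R] (a : R) (w u : ℕ) : R[X] :=
  (X - 1) ^ w * (X + C a) ^ u

lemma X_add_C_mul_derivative_krawtchoukGen {R : Type*} [CommRing R] (a : R) (w u : ℕ) :
    (X + C a) * derivative (krawtchoukGen a w u) =
      C (w + u : R) * krawtchoukGen a w u + C (w * (a + 1)) * krawtchoukGen a (w - 1) u := by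
  simp only [krawtchoukGen, derivative_mul, derivative_X_add_C_pow, ← C_1, derivative_X_sub_C_pow]
  rcases w with _ | w <;> rcases u with _ | u <;>
    simp only [Nat.cast_zero, Nat.cast_add, Nat.cast_one, Nat.add_sub_cancel, map_zero, map_one,
      map_add, map_mul] <;>
    ring

lemma mul_succ_mul_coeff_succ_krawtchoukGen {R : Type*} [CommRing R] (a : R) (w u k : ℕ) :
    a * (k + 1) * (krawtchoukGen a w u).coeff (k + 1) =
      (w + u - k) * (krawtchoukGen a w u).coeff k +
        w * (a + 1) * (krawtchoukGen a (w - 1) u).coeff k := by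
  have h := congrArg (coeff · k) (X_add_C_mul_derivative_krawtchoukGen a w u)
  simp only [add_mul, coeff_add, coeff_C_mul] at h
  rcases k with _ | k <;>
    simp only [coeff_X_mul_zero, coeff_X_mul, coeff_derivative] at h <;>
    push_cast at h ⊢ <;>
    linear_combination h

lemma abs_coeff_X_sub_one_pow_mul_le {p : ℝ[X]} (hp : ∀ k, 0 ≤ p.coeff k) (w k : ℕ) :
    |((X - 1) ^ w * p).coeff k| ≤ ((X + 1) ^ w * p).coeff k := by
  induction w generalizing k with
  | zero => simp [abs_of_nonneg (hp k)]
  | succ w ih =>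
    have expand_sub : (X - 1) ^ (w + 1) * p = X * ((X - 1) ^ w * p) - (X - 1) ^ w * p := by ring
    have expand_add : (X + 1) ^ (w + 1) * p = X * ((X + 1) ^ w * p) + (X + 1) ^ w * p := by ring
    rw [expand_sub, expand_add, coeff_sub, coeff_add]
    refine (abs_sub _ _).trans (add_le_add ?_ (ih k))
    cases k with
    | zero => simp
    | succ k => simpa only [coeff_X_mul] using ih k

lemma coeff_X_mul_X_add_C_pow_le {a : ℝ} (ha : 0 ≤ a) {n k : ℕ} (hk : (a + 1) * k ≤ n + 1) :
    (X * (X + C a) ^ n).coeff k ≤ ((X + C a) ^ (n + 1)).coeff k / (a + 1) := by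
  rw [le_div_iff₀ (by positivity)]
  cases k with
  | zero => simpa using coeff_X_add_C_pow_nonneg ha (n + 1) 0
  | succ k =>
    rw [coeff_X_mul]
    refine le_of_mul_le_mul_left ?_ (k.cast_add_one_pos (α := ℝ))
    push_cast at hk
    calc (k + 1) * (((X + C a) ^ n).coeff k * (a + 1))
      _ = (a + 1) * (k + 1) * ((X + C a) ^ n).coeff k := by ring
      _ ≤ (n + 1) * ((X + C a) ^ n).coeff k := by
        gcongr
        exact coeff_X_add_C_pow_nonneg ha n k
      _ = (k + 1) * ((X + C a) ^ (n + 1)).coeff (k + 1) :=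
        (succ_mul_coeff_succ_X_add_C_pow_succ a n k).symm

-- Writing `X + 1` as the convex combination `(1 / a) (X + a) + (1 - 1 / a) X`, each factor
-- `X + 1` costs at most `1 / a + (1 - 1 / a) / (a + 1) = 2 / (a + 1)`.
lemma coeff_X_add_one_pow_mul_le {a : ℝ} (ha : 1 ≤ a) {w u k : ℕ} (hk : (a + 1) * k ≤ w + u) :
    ((X + 1) ^ w * (X + C a) ^ u).coeff k ≤
      (2 / (a + 1)) ^ w * ((X + C a) ^ (w + u)).coeff k := by
  induction w generalizing u k with
  | zero => simp
  | succ w ih =>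
    have convex_combination : (X + 1) ^ (w + 1) * (X + C a) ^ u =
        C (1 / a) * ((X + 1) ^ w * (X + C a) ^ (u + 1)) +
          C (1 - 1 / a) * (X * ((X + 1) ^ w * (X + C a) ^ u)) := by
      have hC : C (1 / a) * C a = 1 := by rw [← C_mul, one_div_mul_cancel (by positivity), C_1]
      rw [C_sub, C_1]
      linear_combination (-(X + 1) ^ w * (X + C a) ^ u) * hC
    have unshifted : ((X + 1) ^ w * (X + C a) ^ (u + 1)).coeff k ≤
        (2 / (a + 1)) ^ w * ((X + C a) ^ (w + u + 1)).coeff k :=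
      ih (by push_cast at hk ⊢; linarith)
    have shifted : (X * ((X + 1) ^ w * (X + C a) ^ u)).coeff k ≤
        (2 / (a + 1)) ^ w * (X * (X + C a) ^ (w + u)).coeff k := by
      cases k with
      | zero => simp
      | succ k =>
        rw [coeff_X_mul, coeff_X_mul]
        exact ih (by push_cast at hk; linarith)
    have shift_gain := coeff_X_mul_X_add_C_pow_le (n := w + u) (k := k) (zero_le_one.trans ha)
      (by push_cast at hk ⊢; linarith)
    have inv_le_one : 1 / a ≤ 1 := (div_le_one (by positivity)).2 ha
    rw [convex_combination, coeff_add, coeff_C_mul, coeff_C_mul, Nat.add_right_comm]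
    set c := ((X + C a) ^ (w + u + 1)).coeff k
    calc 1 / a * ((X + 1) ^ w * (X + C a) ^ (u + 1)).coeff k +
          (1 - 1 / a) * (X * ((X + 1) ^ w * (X + C a) ^ u)).coeff k
      _ ≤ 1 / a * ((2 / (a + 1)) ^ w * c) +
          (1 - 1 / a) * ((2 / (a + 1)) ^ w * (c / (a + 1))) := by
        have := sub_nonneg.2 inv_le_one
        gcongr
        exact shifted.trans (by gcongr)
      _ = (2 / (a + 1)) ^ (w + 1) * c := by
        rw [pow_succ]
        field_simp
        ring

/-- The Krawtchouk polynomials normalized by the size of the sphere, that is, the value at a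
character of dual weight `w` of the Fourier transform of the uniform probability measure on the
sphere of radius `w + u - k`. For `k > w + u` it is the junk value `0 / 0 = 0`. -/
def krawtchouk (a : ℝ) (w u k : ℕ) : ℝ :=
  (krawtchoukGen a w u).coeff k / ((X + C a) ^ (w + u)).coeff k

lemma krawtchouk_zero {a : ℝ} (ha : 0 < a) {u k : ℕ} (hk : k ≤ u) : krawtchouk a 0 u k = 1 := by
  simpa [krawtchouk, krawtchoukGen] using div_self (coeff_X_add_C_pow_pos ha hk).ne'

theorem abs_krawtchouk_le {a : ℝ} (ha : 1 ≤ a) {w u k : ℕ} (hk : (a + 1) * k ≤ w + u) :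
    |krawtchouk a w u k| ≤ (2 / (a + 1)) ^ w := by
  have ha₀ : 0 < a := zero_lt_one.trans_le ha
  have hkn : k ≤ w + u := by
    have : (k : ℝ) ≤ (a + 1) * k := le_mul_of_one_le_left k.cast_nonneg (by linarith)
    exact_mod_cast this.trans hk
  have hpos := coeff_X_add_C_pow_pos ha₀ hkn
  rw [krawtchouk, abs_div, abs_of_pos hpos, div_le_iff₀ hpos]
  exact (abs_coeff_X_sub_one_pow_mul_le (coeff_X_add_C_pow_nonneg ha₀.le u) w k).trans
    (coeff_X_add_one_pow_mul_le ha hk)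

lemma fwdDiff_krawtchouk {a : ℝ} (ha : 0 < a) {w u k : ℕ} (hk : k + 1 ≤ w + u) :
    Δ_[1] (krawtchouk a w u) k =
      (a + 1) / a * (w / (w + u)) * krawtchouk a (w - 1) u k := by
  rcases w with _ | w
  · rw [zero_add] at hk
    simp [fwdDiff, krawtchouk_zero ha hk, krawtchouk_zero ha (Nat.le_of_succ_le hk)]
  have c_shift := succ_mul_coeff_succ_X_add_C_pow_succ a (w + u) k
  have c_next := mul_succ_mul_coeff_succ_krawtchoukGen a 0 (w + u + 1) k
  have p_next := mul_succ_mul_coeff_succ_krawtchoukGen a (w + 1) u k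
  have c_pos := coeff_X_add_C_pow_pos ha (show k ≤ w + u by omega)
  have c_succ_pos := coeff_X_add_C_pow_pos ha (show k + 1 ≤ w + u + 1 by omega)
  simp only [krawtchoukGen, pow_zero, one_mul, Nat.cast_zero, zero_mul, add_zero, zero_add]
    at c_next
  simp only [fwdDiff, krawtchouk, Nat.add_right_comm w 1 u, Nat.add_sub_cancel] at p_next ⊢
  set p := (krawtchoukGen a (w + 1) u).coeff
  set q := (krawtchoukGen a w u).coeff k
  set c := ((X + C a) ^ (w + u + 1)).coeff
  have codegree_ne_zero : ((w + u + 1 : ℕ) - k : ℝ) ≠ 0 :=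
    sub_ne_zero.2 (by exact_mod_cast (by omega : w + u + 1 ≠ k))
  calc p (k + 1) / c (k + 1) - p k / c k
    _ = a * (k + 1) * p (k + 1) / (a * (k + 1) * c (k + 1)) -
        ((w + u + 1 : ℕ) - k) * p k / (((w + u + 1 : ℕ) - k) * c k) := by
      rw [mul_div_mul_left _ _ (by positivity), mul_div_mul_left _ _ codegree_ne_zero]
    _ = (w + 1 : ℕ) * (a + 1) * q / (a * ((k + 1) * c (k + 1))) := by
      rw [← c_next, ← sub_div, p_next, mul_assoc a]
      push_cast
      ring
    _ = _ := by
      rw [c_shift]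
      push_cast
      field_simp
      ring

theorem fwdDiff_iter_krawtchouk {a : ℝ} (ha : 0 < a) {w u k t : ℕ} (hk : k + t ≤ w + u) :
    (Δ_[1])^[t] (krawtchouk a w u) k =
      ((a + 1) / a) ^ t * (w.descFactorial t / (w + u).descFactorial t) *
        krawtchouk a (w - t) u k := by
  induction t generalizing k with
  | zero => simp
  | succ t ih =>
    rw [Function.iterate_succ_apply', fwdDiff, ih (by omega), ih (by omega), ← mul_sub]
    rcases lt_or_ge w t with hwt | hwt
    · simp [Nat.descFactorial_of_lt hwt]
    · have step := fwdDiff_krawtchouk ha (w := w - t) (u := u) (k := k) (by omega)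
      have sub_add_cast : ((w - t : ℕ) + u : ℝ) = (w + u - t : ℕ) := by
        exact_mod_cast (Nat.sub_add_comm hwt).symm
      rw [fwdDiff, sub_add_cast] at step
      rw [step, Nat.descFactorial_succ, Nat.descFactorial_succ, Nat.cast_mul, Nat.cast_mul,
        mul_div_mul_comm, pow_succ, Nat.sub_sub]
      ring

lemma descFactorial_div_descFactorial_le {w n : ℕ} (hwn : w ≤ n) (t : ℕ) :
    (w.descFactorial t / n.descFactorial t : ℝ) ≤ (w / n) ^ t := by
  induction t with
  | zero => simp
  | succ t ih =>
    have factor_le : ((w - t : ℕ) / (n - t : ℕ) : ℝ) ≤ w / n := by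
      rcases le_or_gt w t with hwt | htw
      · rw [Nat.sub_eq_zero_of_le hwt, Nat.cast_zero, zero_div]
        positivity
      · have htn : t < n := htw.trans_le hwn
        have hn : (0 : ℝ) < n := by exact_mod_cast (Nat.zero_le t).trans_lt htn
        have hsub : (0 : ℝ) < (n - t : ℕ) := by exact_mod_cast Nat.sub_pos_of_lt htn
        have hwn' : (w : ℝ) ≤ n := by exact_mod_cast hwn
        rw [div_le_div_iff₀ hsub hn, Nat.cast_sub htw.le, Nat.cast_sub htn.le]
        nlinarith [mul_le_mul_of_nonneg_right hwn' t.cast_nonneg]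
    rw [Nat.descFactorial_succ, Nat.descFactorial_succ, Nat.cast_mul, Nat.cast_mul,
      mul_div_mul_comm, pow_succ']
    gcongr

theorem abs_fwdDiff_iter_krawtchouk_le {a : ℝ} (ha : 1 ≤ a) {w u k t : ℕ}
    (hk : (a + 1) * k + t ≤ w + u) :
    |(Δ_[1])^[t] (krawtchouk a w u) k| ≤
      ((a + 1) / a) ^ t * (w / (w + u)) ^ t * (2 / (a + 1)) ^ (w - t) := by
  have ha₀ : 0 < a := zero_lt_one.trans_le ha
  have hkt : k + t ≤ w + u := by
    have : (k : ℝ) ≤ (a + 1) * k := le_mul_of_one_le_left k.cast_nonneg (by linarith)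
    exact_mod_cast (by linarith : (k + t : ℝ) ≤ w + u)
  rw [fwdDiff_iter_krawtchouk ha₀ hkt, abs_mul, abs_of_nonneg (by positivity)]
  have ratio_le : (w.descFactorial t / (w + u).descFactorial t : ℝ) ≤ (w / (w + u)) ^ t := by
    exact_mod_cast descFactorial_div_descFactorial_le (Nat.le_add_right w u) t
  have decay : |krawtchouk a (w - t) u k| ≤ (2 / (a + 1)) ^ (w - t) := by
    have : (w : ℝ) ≤ (w - t : ℕ) + t := by exact_mod_cast le_tsub_add
    exact abs_krawtchouk_le ha (by linarith)
  gcongr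

end Krawtchouk

section CharWeight

open Polynomial

variable {ι A R : Type*} [Fintype ι] [DecidableEq ι] [AddCommGroup A]

/-- The restriction of a character of `ι → A` to its `i`-th coordinate. -/
def coordChar [CommMonoid R] (ψ : AddChar (ι → A) R) (i : ι) : AddChar A R :=
  ψ.compAddMonoidHom (AddMonoidHom.single (fun _ => A) i)

lemma apply_eq_prod_coordChar [CommMonoid R] (ψ : AddChar (ι → A) R) (y : ι → A) :
    ψ y = ∏ i, coordChar ψ i (y i) := by
  conv_lhs => rw [← univ_sum_single y]
  exact map_prod ψ.toMonoidHom (fun i => Multiplicative.ofAdd (Pi.single i (y i))) univ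

open Classical in
/-- The dual Hamming weight: the number of coordinates on which a character is nontrivial. -/
def charWeight [CommMonoid R] (ψ : AddChar (ι → A) R) : ℕ :=
  #{i | coordChar ψ i ≠ 0}

lemma charWeight_zero [CommMonoid R] : charWeight (0 : AddChar (ι → A) R) = 0 := by
  have trivial_coord (i : ι) : coordChar (0 : AddChar (ι → A) R) i = 0 := by ext; rfl
  simp [charWeight, trivial_coord]

lemma charWeight_le [CommMonoid R] (ψ : AddChar (ι → A) R) :
    charWeight ψ ≤ Fintype.card ι :=
  card_le_univ _

variable [Fintype A] [DecidableEq A] [CommRing R] [IsDomain R]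

open Classical in
lemma sum_C_addChar_mul_X_pow (χ : AddChar A R) :
    ∑ a, C (χ a) * X ^ (if a = 0 then 1 else 0) =
      if χ = 0 then X + C (Fintype.card A - 1 : R) else X - 1 := by
  have split_zero (a : A) : C (χ a) * X ^ (if a = 0 then 1 else 0) =
      C (χ a) + if a = 0 then X - 1 else 0 := by
    split_ifs with h
    · simp [h]
    · simp
  simp only [split_zero, sum_add_distrib, sum_ite_eq', mem_univ, if_true, ← map_sum,
    AddChar.sum_eq_ite]
  split_ifs
  · rw [C_sub, C_1]
    ring
  · simp

theorem sum_C_apply_mul_X_pow_card_zeros (ψ : AddChar (ι → A) R) :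
    ∑ y : ι → A, C (ψ y) * X ^ #{i | y i = 0} =
      krawtchoukGen (Fintype.card A - 1 : R) (charWeight ψ) (Fintype.card ι - charWeight ψ) := by
  classical
  have card_trivial : #{i | coordChar ψ i = 0} = Fintype.card ι - charWeight ψ :=
    Nat.eq_sub_of_add_eq (card_filter_add_card_filter_not _)
  calc ∑ y : ι → A, C (ψ y) * X ^ #{i | y i = 0}
    _ = ∏ i, ∑ a, C (coordChar ψ i a) * X ^ (if a = 0 then 1 else 0) := by
      rw [prod_univ_sum, Fintype.piFinset_univ]
      refine sum_congr rfl fun y _ => ?_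
      rw [prod_mul_distrib, prod_pow_eq_pow_sum, ← map_prod, ← apply_eq_prod_coordChar,
        card_filter]
    _ = _ := by
      simp only [sum_C_addChar_mul_X_pow]
      rw [prod_ite, prod_const, prod_const, card_trivial, mul_comm, krawtchoukGen, charWeight]

theorem sum_apply_card_zeros_eq (ψ : AddChar (ι → A) R) (k : ℕ) :
    ∑ y : ι → A with #{i | y i = 0} = k, ψ y =
      (krawtchoukGen (Fintype.card A - 1 : R) (charWeight ψ)
        (Fintype.card ι - charWeight ψ)).coeff k := by
  rw [← sum_C_apply_mul_X_pow_card_zeros, finsetSum_coeff, sum_filter]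
  simp only [coeff_C_mul, coeff_X_pow, mul_ite, mul_one, mul_zero, eq_comm]

end CharWeight

section Sphere

open Polynomial fwdDiff

variable {m N : ℕ}

lemma hw_eq_sub_iff (y : Fin N → ZMod (m + 1)) (k : ℕ) :
    (hw y : ℤ) = N - k ↔ #{i | y i = 0} = k := by
  have h : #{i | y i = 0} + hw y = N :=
    (card_filter_add_card_filter_not _).trans (card_fin N)
  omega

lemma sum_sphere_eq_coeff (ψ : AddChar (Fin N → ZMod (m + 1)) ℂ) (k : ℕ) :
    ∑ y with (hw y : ℤ) = N - k, ψ y =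
      ((krawtchoukGen (m : ℝ) (charWeight ψ) (N - charWeight ψ)).coeff k : ℂ) := by
  have h := sum_apply_card_zeros_eq ψ k
  have real_gen : krawtchoukGen (m : ℂ) (charWeight ψ) (N - charWeight ψ) =
      (krawtchoukGen (m : ℝ) (charWeight ψ) (N - charWeight ψ)).map Complex.ofRealHom := by
    simp [krawtchoukGen]
  simp only [hw_eq_sub_iff]
  rw [h, ZMod.card, Nat.cast_succ, add_sub_cancel_right, Fintype.card_fin, real_gen, coeff_map]
  rfl

lemma card_sphere_eq_coeff (k : ℕ) :
    (#{y : Fin N → ZMod (m + 1) | (hw y : ℤ) = N - k} : ℂ) =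
      (((X + C (m : ℝ)) ^ N).coeff k : ℝ) := by
  have h := sum_sphere_eq_coeff (0 : AddChar (Fin N → ZMod (m + 1)) ℂ) k
  simpa [charWeight_zero, krawtchoukGen] using h

theorem charTransform_sigmaC (ψ : AddChar (Fin N → ZMod (m + 1)) ℂ) (k : ℕ) :
    charTransform (sigmaC m N (N - k)) ψ =
      krawtchouk m (charWeight ψ) (N - charWeight ψ) k := by
  have hle : charWeight ψ ≤ N := (charWeight_le ψ).trans_eq (Fintype.card_fin N)
  simp only [charTransform, sigmaC, ite_mul, zero_mul]
  rw [← sum_filter, ← mul_sum, sum_sphere_eq_coeff, card_sphere_eq_coeff, krawtchouk,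
    Nat.add_sub_cancel' hle, Complex.ofReal_div, div_eq_inv_mul]

lemma sum_norm_sigmaC_le_one (r : ℤ) : ∑ x, ‖sigmaC m N r x‖ ≤ 1 := by
  simp only [sigmaC, apply_ite norm, norm_zero, norm_inv, Complex.norm_natCast]
  rw [← sum_filter, sum_const, nsmul_eq_mul]
  exact mul_inv_le_one

lemma convC_sum_mul {κ : Type*} (s : Finset κ) (c : κ → ℂ)
    (g : κ → (Fin N → ZMod (m + 1)) → ℂ) (f : (Fin N → ZMod (m + 1)) → ℂ)
    (x : Fin N → ZMod (m + 1)) :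
    convC (fun y => ∑ j ∈ s, c j * g j y) f x = ∑ j ∈ s, c j * convC (g j) f x := by
  simp only [convC, sum_mul, mul_sum, mul_assoc]
  exact sum_comm

/-- The convolution kernel `∑ⱼ (-1)ʲ (t choose j) σ_{N-k+j}` of the `t`-th finite difference of
spherical averages. -/
def sphereDiff (m N t k : ℕ) : (Fin N → ZMod (m + 1)) → ℂ := fun x =>
  ∑ j ∈ range (t + 1), (-1) ^ j * (t.choose j : ℂ) * sigmaC m N (N - k + j) x

lemma charTransform_sphereDiff (t k : ℕ) (ψ : AddChar (Fin N → ZMod (m + 1)) ℂ) :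
    charTransform (sphereDiff m N t k) ψ =
      ∑ j ∈ range (t + 1), (-1) ^ j * (t.choose j : ℂ) *
        charTransform (sigmaC m N (N - k + j)) ψ :=
  charTransform_sum_mul _ _ _ _

lemma norm_charTransform_sphereDiff_le_two_pow (t k : ℕ)
    (ψ : AddChar (Fin N → ZMod (m + 1)) ℂ) :
    ‖charTransform (sphereDiff m N t k) ψ‖ ≤ 2 ^ t := by
  rw [charTransform_sphereDiff]
  calc ‖∑ j ∈ range (t + 1), (-1) ^ j * (t.choose j : ℂ) *
        charTransform (sigmaC m N (N - k + j)) ψ‖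
    _ ≤ ∑ j ∈ range (t + 1), (t.choose j : ℝ) * 1 := by
      refine norm_sum_le_of_le _ fun j _ => ?_
      rw [norm_mul, norm_mul, norm_pow, norm_neg, norm_one, one_pow, one_mul,
        Complex.norm_natCast]
      gcongr
      exact (norm_charTransform_le _ ψ).trans (sum_norm_sigmaC_le_one _)
    _ = 2 ^ t := by
      simp only [mul_one]
      exact_mod_cast Nat.sum_range_choose t

lemma charTransform_sphereDiff_add (t k : ℕ) (ψ : AddChar (Fin N → ZMod (m + 1)) ℂ) :
    charTransform (sphereDiff m N t (k + t)) ψ =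
      ((Δ_[1])^[t] (krawtchouk m (charWeight ψ) (N - charWeight ψ)) k : ℝ) := by
  rw [charTransform_sphereDiff, fwdDiff_iter_eq_sum_shift, ← sum_range_reflect, Complex.ofReal_sum]
  refine sum_congr rfl fun j hj => ?_
  have hjt : j ≤ t := Nat.lt_succ_iff.1 (mem_range.1 hj)
  have radius : (N : ℤ) - (k + t : ℕ) + (t + 1 - 1 - j : ℕ) = N - (k + j : ℕ) := by omega
  rw [radius, charTransform_sigmaC, Nat.add_sub_cancel, Nat.choose_symm hjt]
  simp

theorem norm_charTransform_sphereDiff_add_le (hm : 1 ≤ m) {t k : ℕ}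
    (hk : (m + 1) * k + t ≤ N) (ψ : AddChar (Fin N → ZMod (m + 1)) ℂ) :
    ‖charTransform (sphereDiff m N t (k + t)) ψ‖ ≤
      ((m + 1) / m) ^ t * (charWeight ψ / N) ^ t * (2 / (m + 1)) ^ (charWeight ψ - t) := by
  have weight_add : (charWeight ψ + (N - charWeight ψ : ℕ) : ℝ) = N := by
    have hle : charWeight ψ ≤ N := (charWeight_le ψ).trans_eq (Fintype.card_fin N)
    exact_mod_cast Nat.add_sub_cancel' hle
  have h := abs_fwdDiff_iter_krawtchouk_le (a := m) (w := charWeight ψ)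
    (u := N - charWeight ψ) (k := k) (t := t) (by exact_mod_cast hm)
    (by rw [weight_add]; exact_mod_cast hk)
  rwa [weight_add, ← Real.norm_eq_abs, ← Complex.norm_real, ← charTransform_sphereDiff_add] at h

end Sphere

lemma exists_pow_mul_pow_sub_le {ρ : ℝ} (hρ₀ : 0 < ρ) (hρ₁ : ρ < 1) (t : ℕ) :
    ∃ B : ℝ, ∀ w : ℕ, (w : ℝ) ^ t * ρ ^ (w - t) ≤ B := by
  obtain ⟨B, hB⟩ := (tendsto_pow_const_mul_const_pow_of_abs_lt_one t
    (by rwa [abs_of_pos hρ₀])).bddAbove_range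
  refine ⟨B / ρ ^ t, fun w => ?_⟩
  rw [le_div_iff₀ (by positivity), mul_assoc, ← pow_add]
  calc (w : ℝ) ^ t * ρ ^ (w - t + t)
    _ ≤ (w : ℝ) ^ t * ρ ^ w := by
      gcongr (w : ℝ) ^ t * ?_
      exact pow_le_pow_of_le_one hρ₀.le hρ₁.le le_tsub_add
    _ ≤ B := hB ⟨w, rfl⟩

lemma sum_succ_pow_mul_sq_le {d n : ℕ} (hd : 1 ≤ d) {s : Finset ℕ} (hs : s ⊆ range n)
    {b : ℕ → ℝ} {A : ℝ} (hb : ∀ k ∈ s, |b k| ≤ A) :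
    ∑ k ∈ s, ((k : ℝ) + 1) ^ (d - 1) * b k ^ 2 ≤ (n : ℝ) ^ d * A ^ 2 := by
  calc ∑ k ∈ s, ((k : ℝ) + 1) ^ (d - 1) * b k ^ 2
    _ ≤ ∑ _ ∈ s, (n : ℝ) ^ (d - 1) * A ^ 2 := by
      refine sum_le_sum fun k hk => ?_
      have hkn : (k : ℝ) + 1 ≤ n := by exact_mod_cast mem_range.1 (hs hk)
      have hsq : b k ^ 2 ≤ A ^ 2 := sq_le_sq.2 ((hb k hk).trans (le_abs_self A))
      gcongr
    _ ≤ ∑ _ ∈ range n, (n : ℝ) ^ (d - 1) * A ^ 2 :=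
      sum_le_sum_of_subset_of_nonneg hs fun _ _ _ => by positivity
    _ = (n : ℝ) ^ d * A ^ 2 := by
      rw [sum_const, card_range, nsmul_eq_mul, ← mul_assoc,
        mul_pow_sub_one (Nat.one_le_iff_ne_zero.1 hd)]

lemma sum_succ_pow_mul_sq_le_of_lt_of_ge {t N : ℕ} (ht : 1 ≤ t) (hN : 1 ≤ N) {s : Finset ℕ}
    (hs : s ⊆ range N) {b : ℕ → ℝ} {A B : ℝ} (hA : ∀ k ∈ s, k < t → |b k| ≤ A)
    (hB : ∀ k ∈ s, t ≤ k → |b k| ≤ B / N ^ t) :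
    ∑ k ∈ s, ((k : ℝ) + 1) ^ (2 * t - 1) * b k ^ 2 ≤ (t : ℝ) ^ (2 * t) * A ^ 2 + B ^ 2 := by
  rw [← sum_filter_add_sum_filter_not s (· < t)]
  refine add_le_add ?_ ?_
  · refine sum_succ_pow_mul_sq_le (by omega) ?_ fun k hk => ?_
    · exact fun k hk => mem_range.2 (mem_filter.1 hk).2
    · exact hA k (mem_filter.1 hk).1 (mem_filter.1 hk).2
  · calc ∑ k ∈ s with ¬k < t, ((k : ℝ) + 1) ^ (2 * t - 1) * b k ^ 2
      _ ≤ (N : ℝ) ^ (2 * t) * (B / N ^ t) ^ 2 := by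
        refine sum_succ_pow_mul_sq_le (by omega) ((filter_subset _ s).trans hs) fun k hk => ?_
        exact hB k (mem_filter.1 hk).1 (not_lt.1 (mem_filter.1 hk).2)
      _ = B ^ 2 := by
        rw [div_pow, ← pow_mul, mul_comm t 2, mul_div_cancel₀ _ (by positivity)]

lemma exists_norm_charTransform_sphereDiff_le (m : ℕ) (hm : 2 ≤ m) (t : ℕ) :
    ∃ B : ℝ, ∀ N k : ℕ, t ≤ k → (m + 1) * k ≤ N → ∀ ψ : AddChar (Fin N → ZMod (m + 1)) ℂ,
      ‖charTransform (sphereDiff m N t k) ψ‖ ≤ B / N ^ t := by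
  have rate_lt_one : 2 / (m + 1 : ℝ) < 1 := by
    rw [div_lt_one (by positivity)]
    exact_mod_cast Nat.lt_succ_of_le hm
  obtain ⟨B, hB⟩ := exists_pow_mul_pow_sub_le (by positivity) rate_lt_one t
  refine ⟨((m + 1) / m) ^ t * B, fun N k htk hk ψ => ?_⟩
  obtain ⟨l, rfl⟩ := Nat.exists_eq_add_of_le' htk
  calc ‖charTransform (sphereDiff m N t (l + t)) ψ‖
    _ ≤ ((m + 1) / m) ^ t * (charWeight ψ / N) ^ t * (2 / (m + 1)) ^ (charWeight ψ - t) :=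
      norm_charTransform_sphereDiff_add_le (by omega) (by nlinarith) ψ
    _ = ((m + 1) / m) ^ t * (charWeight ψ ^ t * (2 / (m + 1)) ^ (charWeight ψ - t)) / N ^ t := by
      ring
    _ ≤ ((m + 1) / m) ^ t * B / N ^ t := by
      gcongr
      exact hB _

theorem exists_sum_succ_pow_mul_norm_sq_charTransform_sphereDiff_le (m : ℕ) (hm : 2 ≤ m) (t : ℕ)
    (ht : 1 ≤ t) :
    ∃ K : ℝ, 0 ≤ K ∧ ∀ N : ℕ, 1 ≤ N → ∀ ψ : AddChar (Fin N → ZMod (m + 1)) ℂ,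
      ∑ k ∈ range (N / (m + 1) + 1),
        ((k : ℝ) + 1) ^ (2 * t - 1) * ‖charTransform (sphereDiff m N t k) ψ‖ ^ 2 ≤ K := by
  obtain ⟨B, hB⟩ := exists_norm_charTransform_sphereDiff_le m hm t
  refine ⟨(t : ℝ) ^ (2 * t) * (2 ^ t) ^ 2 + B ^ 2, by positivity, fun N hN ψ => ?_⟩
  refine sum_succ_pow_mul_sq_le_of_lt_of_ge ht hN
    (range_subset_range.2 (Nat.div_lt_self hN (by omega))) ?_ ?_ <;>
    simp only [abs_norm]
  · exact fun k _ _ => norm_charTransform_sphereDiff_le_two_pow t k ψ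
  · intro k hk htk
    have hkN : k ≤ N / (m + 1) := Nat.lt_succ_iff.1 (mem_range.1 hk)
    exact hB N k htk ((Nat.mul_le_mul_left _ hkN).trans (Nat.mul_div_le N (m + 1))) ψ

theorem statement17 (m : ℕ) (hm : 2 ≤ m) (t : ℕ) (ht : 1 ≤ t) :
    ∃ C : ℝ, ∀ N : ℕ, 1 ≤ N → ∀ f : (Fin N → ZMod (m + 1)) → ℂ,
      ∑ x, ∑ k ∈ Finset.range (N / (m + 1) + 1),
          ((k : ℝ) + 1) ^ (2 * t - 1) *
            ‖∑ j ∈ Finset.range (t + 1),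
                (-1 : ℂ) ^ j * (t.choose j : ℂ) *
                  convC (sigmaC m N ((N : ℤ) - k + j)) f x‖ ^ 2 ≤
        C ^ 2 * ∑ x, ‖f x‖ ^ 2 := by
  obtain ⟨K, hK₀, hK⟩ := exists_sum_succ_pow_mul_norm_sq_charTransform_sphereDiff_le m hm t ht
  refine ⟨√K, fun N hN f => ?_⟩
  rw [Real.sq_sqrt hK₀]
  simp only [← convC_sum_mul]
  exact sum_sum_mul_norm_sq_conv_le _ _ (sphereDiff m N t) (hK N hN) f
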